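/- Let Γ be a group with finite symmetric generating set S acting by isometries on a metric space X with basepoint x₀, such that the orbit map g ↦ g x₀ is a quasi-isometric embedding from (Γ, word metric) to X. Then every infinite-order element of Γ is loxodromic for the action on X. -/

import Mathlib

open Filter

/-- The Gromov product `(y ⬝ z)_x = (d(x,y) + d(x,z) - d(y,z))/2`. -/
noncomputable def gromovProd {X : Type*} [MetricSpace X] (x y z : X) : ℝ :=
  (dist x y + dist x z - dist y z) / 2

/-- The word length of `g` with respect to a generating set `S`. -/
noncomputable def wordLength {G : Type*} [Group G] (S : Set G) (g : G) : ℕ :=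
  sInf {n | ∃ w : List G, (∀ x ∈ w, x ∈ S) ∧ w.length = n ∧ w.prod = g}

/-!
Let `ℓ(g)` be the stable translation length. Two facts about a `δ`-hyperbolic space `X` drive the
proof. First, `d(p, g²p) ≤ d(p, gp) + ℓ(g) + 2δ`, since otherwise the orbit of `p` escapes faster
than `ℓ(g)`. Secondly, if `g` moves the end points of a long segment by little compared with their
distance to a point `p` close to the segment, then `g` nearly translates `p` along the segment and
`g²` translates it twice as far; by the first fact the translation is then at most about `ℓ(g)`.

Suppose `g` has infinite order and `ℓ(g) = 0`. For any `J` the powers `g ^ j`, `j ≤ J`, move both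
`x` and `g ^ n • x` by the same bounded amount, while `d(x, gⁿx)` is as large as we like. A
quasi-geodesic of the orbit joining these points passes at some `k • x` near their midpoint, so all
of `g ^ j`, `j ≤ J`, move `k • x` by at most a constant independent of `J`. Hence the conjugates
`k⁻¹ g ^ j k` all lie in one finite ball, which is absurd for `J` large.
-/

section Hyperbolic

variable {X : Type*} [PseudoMetricSpace X] {δ : ℝ}

/-- Gromov `δ`-hyperbolicity in its four-point form, which is symmetric in the four points and
equivalent to the inequality on Gromov products with the same `δ`. -/
def IsGromovHyperbolic (X : Type*) [PseudoMetricSpace X] (δ : ℝ) : Prop :=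
  ∀ x y z w : X,
    dist x z + dist y w ≤ max (dist x y + dist z w) (dist x w + dist y z) + 2 * δ

theorem isGromovHyperbolic_of_gromovProd {X : Type*} [MetricSpace X] {δ : ℝ}
    (hδ : ∀ x y z w : X, gromovProd w x z ≥ min (gromovProd w x y) (gromovProd w y z) - δ) :
    IsGromovHyperbolic X δ := by
  intro x y z w
  have h := sub_le_iff_le_add.1 (hδ x y z w)
  simp only [gromovProd, min_le_iff, dist_comm w] at h
  rw [← sub_le_iff_le_add, le_max_iff]
  exact h.imp (fun _ => by linarith) fun _ => by linarith

namespace IsGromovHyperbolic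

theorem le_or_le (h : IsGromovHyperbolic X δ) (x y z w : X) :
    dist x z + dist y w ≤ dist x y + dist z w + 2 * δ ∨
      dist x z + dist y w ≤ dist x w + dist y z + 2 * δ := by
  rw [← le_max_iff, max_add_add_right]
  exact h x y z w

theorem nonneg [Nonempty X] (h : IsGromovHyperbolic X δ) : 0 ≤ δ := by
  obtain ⟨x⟩ := ‹Nonempty X›
  simpa using h x x x x

end IsGromovHyperbolic

/-- `q` lies between `x` and `y` up to an error `E`: the Gromov product of `x` and `y` based at `q`
is at most `E`. -/
def NearlyBetween (E : ℝ) (x q y : X) : Prop :=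
  dist x q + dist y q ≤ dist x y + 2 * E

namespace NearlyBetween

variable {E E' : ℝ} {x x' y q r : X}

theorem symm (h : NearlyBetween E x q y) : NearlyBetween E y q x := by
  unfold NearlyBetween at *
  linarith [dist_comm x y]

theorem nonneg (h : NearlyBetween E x q y) : 0 ≤ E := by
  unfold NearlyBetween at h
  linarith [dist_triangle_right x y q]

theorem mono (h : NearlyBetween E x q y) (hE : E ≤ E') : NearlyBetween E' x q y := by
  unfold NearlyBetween at *
  linarith

theorem smul {M : Type*} [SMul M X] [IsIsometricSMul M X] (c : M) (h : NearlyBetween E x q y) :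
    NearlyBetween E (c • x) (c • q) (c • y) := by
  simpa only [NearlyBetween, dist_smul] using h

theorem move_left (hX : IsGromovHyperbolic X δ) (h : NearlyBetween E x q y)
    (hfar : dist x x' + E + δ < dist x q) : NearlyBetween (E + δ) x' q y := by
  unfold NearlyBetween at *
  rcases hX.le_or_le x x' y q with h' | h' <;>
    linarith [dist_triangle x x' q]

theorem dist_le (hX : IsGromovHyperbolic X δ) (hq : NearlyBetween E x q y)
    (hr : NearlyBetween E x r y) :
    dist q r ≤ |dist x q - dist x r| + 2 * E + 2 * δ := by
  unfold NearlyBetween at *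
  rcases hX.le_or_le x q y r with h | h <;>
    linarith [dist_comm q y, le_abs_self (dist x q - dist x r), neg_le_abs (dist x q - dist x r)]

end NearlyBetween

end Hyperbolic

section Midpoint

variable {X : Type*} [PseudoMetricSpace X] {δ : ℝ}

/-- `f` behaves like the distance to a point that need not exist in `X`: it satisfies the triangle
inequalities, one of them up to `2δ`, and the four-point inequality with that point as a vertex. It
stands in for points on geodesics, since `X` need not be geodesic. -/
structure IsVirtualDist (δ : ℝ) (f : X → ℝ) : Prop where
  le_add_dist (u v : X) : f u ≤ f v + dist u v
  dist_le_add (u v : X) : dist u v ≤ f u + f v + 2 * δ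
  four_point (u v w : X) :
    f v + dist u w ≤ f u + dist v w + 2 * δ ∨ f v + dist u w ≤ f w + dist u v + 2 * δ

/-- The Gromov product of `u` and `v` based at the virtual point with distance function `f`. -/
noncomputable def virtualGromovProd (f : X → ℝ) (u v : X) : ℝ :=
  (f u + f v - dist u v) / 2

theorem virtualGromovProd_comm (f : X → ℝ) (u v : X) :
    virtualGromovProd f u v = virtualGromovProd f v u := by
  rw [virtualGromovProd, virtualGromovProd, dist_comm, add_comm (f u)]

/-- The distance to the virtual midpoint of `x` and `y`; in a tree this is the distance to the
actual midpoint. -/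
noncomputable def midDist (x y u : X) : ℝ :=
  max (dist x u) (dist y u) - dist x y / 2

theorem midDist_left (x y : X) : midDist x y x = dist x y / 2 := by
  rw [midDist, dist_self, dist_comm y, max_eq_right dist_nonneg, sub_half]

theorem midDist_right (x y : X) : midDist x y y = dist x y / 2 := by
  rw [midDist, dist_self, max_eq_left dist_nonneg, sub_half]

theorem dist_left_le_midDist (x y u : X) : dist x u ≤ dist x y / 2 + midDist x y u := by
  rw [midDist]
  linarith [le_max_left (dist x u) (dist y u)]

theorem dist_right_le_midDist (x y u : X) : dist y u ≤ dist x y / 2 + midDist x y u := by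
  rw [midDist]
  linarith [le_max_right (dist x u) (dist y u)]

theorem midDist_eq_or (x y u : X) :
    midDist x y u = dist x u - dist x y / 2 ∨ midDist x y u = dist y u - dist x y / 2 :=
  (max_choice (dist x u) (dist y u)).imp (fun h => by rw [midDist, h]) fun h => by rw [midDist, h]

theorem IsGromovHyperbolic.isVirtualDist_midDist (h : IsGromovHyperbolic X δ) (x y : X) :
    IsVirtualDist δ (midDist x y) where
  le_add_dist u v := by
    rcases midDist_eq_or x y u with hu | hu <;>
      linarith [dist_triangle_right x u v, dist_triangle_right y u v,
        dist_left_le_midDist x y v, dist_right_le_midDist x y v]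
  dist_le_add u v := by
    rcases h.le_or_le x u y v with h' | h' <;>
      linarith [dist_comm u y, dist_left_le_midDist x y u, dist_right_le_midDist x y u,
        dist_left_le_midDist x y v, dist_right_le_midDist x y v]
  four_point u v w := by
    rcases midDist_eq_or x y v with hv | hv
    · exact (h.le_or_le x u v w).imp (fun _ => by linarith [dist_left_le_midDist x y u])
        fun _ => by linarith [dist_left_le_midDist x y w]
    · exact (h.le_or_le y u v w).imp (fun _ => by linarith [dist_right_le_midDist x y u])
        fun _ => by linarith [dist_right_le_midDist x y w]

namespace IsVirtualDist

variable {f : X → ℝ}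

theorem nonneg [Nonempty X] (hf : IsVirtualDist δ f) : 0 ≤ δ := by
  obtain ⟨x⟩ := ‹Nonempty X›
  simpa using hf.four_point x x x

theorem min_virtualGromovProd_le (hf : IsVirtualDist δ f) (u v w : X) :
    min (virtualGromovProd f u v) (virtualGromovProd f v w) - δ ≤ virtualGromovProd f u w := by
  simp only [sub_le_iff_le_add, min_le_iff, virtualGromovProd]
  exact (hf.four_point u v w).symm.imp (fun _ => by linarith) fun _ => by linarith

theorem sub_dist_le_virtualGromovProd (hf : IsVirtualDist δ f) (u v : X) :
    f u - dist u v ≤ virtualGromovProd f u v := by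
  rw [virtualGromovProd]
  linarith [hf.le_add_dist u v]

/- Induction with strides of length `M`: each stride gains `ε * M`, which pays for the `δ` lost in
the hyperbolic inequality. -/
theorem le_virtualGromovProd_of_linear_growth (hf : IsVirtualDist δ f) {p : ℕ → X} {m M : ℕ}
    (hM : 0 < M) {a ε c : ℝ} (hstep : ∀ i j, i ≤ j → j ≤ m → j ≤ i + M → dist (p i) (p j) ≤ c)
    (hgrow : ∀ i ≤ m, a + ε * i ≤ f (p i)) (hε : δ ≤ ε * M) {i : ℕ} (hi : i ≤ m) :
    a + ε * i - c - δ ≤ virtualGromovProd f (p i) (p m) := by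
  have : Nonempty X := ⟨p 0⟩
  have near : ∀ i j, i ≤ j → j ≤ m → j ≤ i + M →
      a + ε * i - c ≤ virtualGromovProd f (p i) (p j) := fun i j hij hj hjM => by
    linarith [hstep i j hij hj hjM, hgrow i (hij.trans hj),
      hf.sub_dist_le_virtualGromovProd (p i) (p j)]
  induction hk : m - i using Nat.strong_induction_on generalizing i with
  | _ k ih =>
    by_cases hiM : m ≤ i + M
    · linarith [near i m hi le_rfl hiM, hf.nonneg]
    · have first := near i (i + M) (by omega) (by omega) le_rfl
      have rest := ih (m - (i + M)) (by omega) (i := i + M) (by omega) rfl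
      push_cast at rest
      refine le_trans ?_ (hf.min_virtualGromovProd_le (p i) (p (i + M)) (p m))
      rw [le_sub_iff_add_le, le_min_iff]
      constructor <;> linarith

end IsVirtualDist

/-- The points `p 0, …, p m` form a discrete `(K, C)`-quasi-geodesic. -/
def IsQuasiGeodesic (K C : ℝ) (m : ℕ) (p : ℕ → X) : Prop :=
  ∀ i j, i ≤ j → j ≤ m →
    1 / K * ((j : ℝ) - i) - C ≤ dist (p i) (p j) ∧ dist (p i) (p j) ≤ K * ((j : ℝ) - i) + C

namespace IsQuasiGeodesic

variable {K C : ℝ} {m : ℕ} {p : ℕ → X}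

theorem drop (hp : IsQuasiGeodesic K C m p) (i₀ : ℕ) :
    IsQuasiGeodesic K C (m - i₀) fun k => p (i₀ + k) := by
  intro i j hij hj
  rcases le_or_gt i₀ m with h | h
  · have := hp (i₀ + i) (i₀ + j) (by omega) (by omega)
    push_cast at this
    rwa [add_sub_add_left_eq_sub] at this
  · obtain rfl : i = j := by omega
    simpa using hp 0 0 le_rfl (Nat.zero_le _)

theorem reverse_take (hp : IsQuasiGeodesic K C m p) {i₀ : ℕ} (hi₀ : i₀ ≤ m) :
    IsQuasiGeodesic K C i₀ fun k => p (i₀ - k) := by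
  intro i j hij hj
  have := hp (i₀ - j) (i₀ - i) (by omega) (by omega)
  rwa [Nat.cast_sub hj, Nat.cast_sub (hij.trans hj), sub_sub_sub_cancel_left, dist_comm] at this

/- Both `f (p 0) ≤ f (p k)` and `k / K - C ≤ d(p 0, p k) ≤ f (p 0) + f (p k) + 2δ` hold; averaging
them with weights `2/3` and `1/3` yields linear growth from a base value of order `f (p 0) / 3`. -/
theorem le_virtualGromovProd_of_forall_le (hp : IsQuasiGeodesic K C m p) (hK : 0 < K)
    {f : X → ℝ} (hf : IsVirtualDist δ f) (hmin : ∀ k ≤ m, f (p 0) ≤ f (p k))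
    {M : ℕ} (hM : 0 < M) (hMδ : 3 * K * δ ≤ M) :
    (f (p 0) - C - 2 * δ) / 3 - (K * M + C) - δ ≤ virtualGromovProd f (p 0) (p m) := by
  have hstep : ∀ i j, i ≤ j → j ≤ m → j ≤ i + M → dist (p i) (p j) ≤ K * M + C := by
    intro i j hij hj hjM
    have : (j : ℝ) - i ≤ M := sub_le_iff_le_add'.2 (mod_cast hjM)
    exact (hp i j hij hj).2.trans (by gcongr)
  have hgrow : ∀ k ≤ m, (f (p 0) - C - 2 * δ) / 3 + 1 / (3 * K) * k ≤ f (p k) := by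
    intro k hk
    have hlow := (hp 0 k (Nat.zero_le k) hk).1
    have hthird : 1 / (3 * K) * (k : ℝ) = 1 / K * k / 3 := by field_simp
    rw [Nat.cast_zero, sub_zero] at hlow
    rw [hthird]
    linarith [hmin k hk, hf.dist_le_add (p 0) (p k)]
  have hε : δ ≤ 1 / (3 * K) * M := by
    rwa [one_div, inv_mul_eq_div, le_div_iff₀' (by positivity)]
  simpa using hf.le_virtualGromovProd_of_linear_growth hM hstep hgrow hε (Nat.zero_le m)

/- Take `p i` nearest to the virtual midpoint. The Gromov products at the midpoint of `p i` with
either end point are at least of order `midDist (p i) / 3`, whereas that of the two end points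
vanishes. -/
theorem exists_midDist_le (hX : IsGromovHyperbolic X δ) (hK : 0 < K)
    (hp : IsQuasiGeodesic K C m p) {M : ℕ} (hM : 0 < M) (hMδ : 3 * K * δ ≤ M) :
    ∃ i ≤ m, midDist (p 0) (p m) (p i) ≤ 3 * (K * M + C + 2 * δ) + C + 2 * δ := by
  have hf := hX.isVirtualDist_midDist (p 0) (p m)
  obtain ⟨i, hi, hmin⟩ : ∃ i ≤ m, ∀ k ≤ m, midDist (p 0) (p m) (p i) ≤ midDist (p 0) (p m) (p k) :=
    Set.exists_min_image (Set.Iic m) (fun k => midDist (p 0) (p m) (p k)) (Set.finite_Iic m)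
      Set.nonempty_Iic
  have right := (hp.drop i).le_virtualGromovProd_of_forall_le hK hf
    (fun k hk => hmin (i + k) (by omega)) hM hMδ
  have left := (hp.reverse_take hi).le_virtualGromovProd_of_forall_le hK hf
    (fun k hk => hmin (i - k) (by omega)) hM hMδ
  have ends : virtualGromovProd (midDist (p 0) (p m)) (p 0) (p m) = 0 := by
    rw [virtualGromovProd, midDist_left, midDist_right, add_halves, sub_self, zero_div]
  have hmid := hf.min_virtualGromovProd_le (p 0) (p i) (p m)
  rw [virtualGromovProd_comm _ (p 0)] at hmid
  simp only [add_zero, Nat.sub_zero, Nat.sub_self, Nat.add_sub_cancel' hi] at right left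
  exact ⟨i, hi, by linarith [le_min left right]⟩

theorem exists_forall_near_midpoint (hX : IsGromovHyperbolic X δ) (hK : 0 < K) (C : ℝ) :
    ∃ D, ∀ (m : ℕ) (p : ℕ → X), IsQuasiGeodesic K C m p → ∃ i ≤ m,
      dist (p 0) (p i) ≤ dist (p 0) (p m) / 2 + D ∧
        dist (p m) (p i) ≤ dist (p 0) (p m) / 2 + D := by
  obtain ⟨M, hM⟩ := exists_nat_ge (max 1 (3 * K * δ))
  have hM₀ : 0 < M := by exact_mod_cast one_pos.trans_le ((le_max_left _ _).trans hM)
  refine ⟨3 * (K * M + C + 2 * δ) + C + 2 * δ, fun m p hp => ?_⟩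
  obtain ⟨i, hi, hmid⟩ := hp.exists_midDist_le hX hK hM₀ ((le_max_right _ _).trans hM)
  exact ⟨i, hi, (dist_left_le_midDist _ _ _).trans (by gcongr),
    (dist_right_le_midDist _ _ _).trans (by gcongr)⟩

end IsQuasiGeodesic

end Midpoint

section TranslationLength

variable {G X : Type*} [PseudoMetricSpace X] [Monoid G] [MulAction G X]

/-- The stable translation length of `g`, measured along the orbit of `x`. For an isometric action
the `liminf` is a limit and does not depend on `x`; `g` is loxodromic when it is positive. -/
noncomputable def stableTranslationLength (g : G) (x : X) : ℝ :=
  liminf (fun n : ℕ => dist x (g ^ n • x) / n) atTop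

variable [IsIsometricSMul G X]

theorem dist_pow_smul_pow_add_smul (g : G) (x : X) (m n : ℕ) :
    dist (g ^ m • x) (g ^ (m + n) • x) = dist x (g ^ n • x) := by
  rw [pow_add, mul_smul, dist_smul]

theorem subadditive_dist_pow_smul (g : G) (x : X) : Subadditive fun n => dist x (g ^ n • x) :=
  fun m n => (dist_triangle x (g ^ m • x) _).trans_eq (by rw [dist_pow_smul_pow_add_smul])

theorem tendsto_stableTranslationLength (g : G) (x : X) :
    Tendsto (fun n : ℕ => dist x (g ^ n • x) / n) atTop (nhds (stableTranslationLength g x)) := by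
  have hbdd : BddBelow (Set.range fun n : ℕ => dist x (g ^ n • x) / n) :=
    ⟨0, Set.forall_mem_range.2 fun n => by positivity⟩
  have hlim := (subadditive_dist_pow_smul g x).tendsto_lim hbdd
  rwa [stableTranslationLength, hlim.liminf_eq]

theorem stableTranslationLength_nonneg (g : G) (x : X) : 0 ≤ stableTranslationLength g x :=
  ge_of_tendsto' (tendsto_stableTranslationLength g x) fun n => by positivity

theorem stableTranslationLength_le (g : G) (x y : X) :
    stableTranslationLength g x ≤ stableTranslationLength g y := by
  have hy := (tendsto_stableTranslationLength g y).add
    (tendsto_const_div_atTop_nhds_zero_nat (2 * dist x y))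
  rw [add_zero] at hy
  refine le_of_tendsto_of_tendsto' (tendsto_stableTranslationLength g x) hy fun n => ?_
  rw [← add_div]
  gcongr
  have := dist_triangle4 x y (g ^ n • y) (g ^ n • x)
  rw [dist_smul, dist_comm y x] at this
  linarith

theorem stableTranslationLength_eq (g : G) (x y : X) :
    stableTranslationLength g x = stableTranslationLength g y :=
  (stableTranslationLength_le g x y).antisymm (stableTranslationLength_le g y x)

theorem stableTranslationLength_pow (g : G) (j : ℕ) (x : X) :
    stableTranslationLength (g ^ j) x = j * stableTranslationLength g x := by
  rcases j.eq_zero_or_pos with rfl | hj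
  · simp [stableTranslationLength]
  · have hsub := ((tendsto_stableTranslationLength g x).comp
      (tendsto_id.const_mul_atTop' hj)).const_mul (j : ℝ)
    refine tendsto_nhds_unique (tendsto_stableTranslationLength (g ^ j) x) (hsub.congr fun n => ?_)
    simp only [Function.comp_apply, id_eq, Nat.cast_mul, pow_mul]
    field_simp

theorem le_stableTranslationLength {g : G} {x : X} {a c : ℝ}
    (h : ∀ n : ℕ, n * a - c ≤ dist x (g ^ n • x)) : a ≤ stableTranslationLength g x := by
  have hlow : Tendsto (fun n : ℕ => a - c / n) atTop (nhds (a - 0)) :=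
    tendsto_const_nhds.sub (tendsto_const_div_atTop_nhds_zero_nat c)
  rw [sub_zero] at hlow
  refine le_of_tendsto_of_tendsto hlow (tendsto_stableTranslationLength g x) ?_
  filter_upwards [eventually_gt_atTop 0] with n hn
  rw [le_div_iff₀ (by positivity)]
  calc (a - c / n) * n = n * a - c := by field_simp
    _ ≤ dist x (g ^ n • x) := h n

variable {δ : ℝ}

theorem dist_pow_smul_add_le (hX : IsGromovHyperbolic X δ) {g : G} {x : X} {a : ℝ} (ha : 0 < a)
    (hg : dist x (g • x) + 2 * δ + a ≤ dist x (g ^ 2 • x)) (n : ℕ) :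
    dist x (g ^ (n + 1) • x) + a ≤ dist x (g ^ (n + 2) • x) := by
  have : Nonempty X := ⟨x⟩
  induction n with
  | zero =>
    rw [zero_add, zero_add, pow_one]
    linarith [hX.nonneg]
  | succ n ih =>
    have h₁ := dist_pow_smul_pow_add_smul g x 1 1
    have h₂ := dist_pow_smul_pow_add_smul g x 1 (n + 2)
    have h₃ := dist_pow_smul_pow_add_smul g x 2 (n + 1)
    rw [show 1 + (n + 2) = n + 3 by ring] at h₂
    rw [show 2 + (n + 1) = n + 3 by ring] at h₃
    rw [pow_one] at h₁ h₂
    rcases hX.le_or_le x (g • x) (g ^ 2 • x) (g ^ (n + 3) • x) with h | h <;> linarith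

theorem dist_sq_smul_le (hX : IsGromovHyperbolic X δ) (g : G) (x : X) :
    dist x (g ^ 2 • x) ≤ dist x (g • x) + stableTranslationLength g x + 2 * δ := by
  by_contra! hlt
  obtain ⟨a, hℓa, hga⟩ : ∃ a, stableTranslationLength g x < a ∧
      dist x (g • x) + 2 * δ + a ≤ dist x (g ^ 2 • x) :=
    ⟨dist x (g ^ 2 • x) - dist x (g • x) - 2 * δ, by linarith, by linarith⟩
  have ha₀ : 0 < a := (stableTranslationLength_nonneg g x).trans_lt hℓa
  refine hℓa.not_ge (le_stableTranslationLength (c := a) fun n => ?_)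
  induction n with
  | zero => simpa using ha₀.le
  | succ n ih =>
    rcases n with _ | n
    · simp
    · push_cast at ih ⊢
      linarith [dist_pow_smul_add_le hX ha₀ hga n]

/- The function `u ↦ d(gx, u) - d(x, u)` is constant up to `2δ` far from `x` and `gx`; compare its
values at `u = gp` and `u = g²p`. -/
theorem abs_dist_sq_smul_sub_le (hX : IsGromovHyperbolic X δ) (g : G) {x p : X}
    (hfar : dist x (g • x) + dist p (g • p) + 2 * δ < dist x p)
    (hfar' : dist x (g • x) + dist p (g • p) + 2 * δ < 2 * dist x (g • p)) :
    |dist x (g ^ 2 • p) + dist x p - 2 * dist x (g • p)| ≤ 2 * δ := by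
  have hxp : dist (g • x) (g • p) = dist x p := dist_smul g x p
  have hxgp : dist (g • x) (g ^ 2 • p) = dist x (g • p) := by rw [sq, mul_smul, dist_smul]
  have hpgp : dist (g • p) (g ^ 2 • p) = dist p (g • p) := by rw [sq, mul_smul, dist_smul]
  have hsymm := dist_comm (g • p) (g ^ 2 • p)
  have : 0 ≤ dist x (g ^ 2 • p) := dist_nonneg
  rw [abs_le]
  constructor
  · rcases hX.le_or_le x (g • x) (g • p) (g ^ 2 • p) with h | h <;> linarith
  · rcases hX.le_or_le x (g • x) (g ^ 2 • p) (g • p) with h | h <;> linarith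

theorem NearlyBetween.smul_of_far (hX : IsGromovHyperbolic X δ) (g : G) {x y p : X} {R D : ℝ}
    (hp : NearlyBetween D x p y) (hx : dist x (g • x) ≤ R) (hy : dist y (g • y) ≤ R)
    (hxp : R + D + 2 * δ < dist x p) (hyp : R + D + 2 * δ < dist y p) :
    NearlyBetween (D + δ + δ) x (g • p) y := by
  have : Nonempty X := ⟨x⟩
  have hδ := hX.nonneg
  have hx' : NearlyBetween (D + δ) x (g • p) (g • y) :=
    (hp.smul g).move_left hX (by rw [dist_comm, dist_smul]; linarith)
  exact (hx'.symm.move_left hX (by rw [dist_comm, dist_smul]; linarith)).symm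

theorem dist_smul_le_of_nearlyBetween (hX : IsGromovHyperbolic X δ) (g : G) {x y p : X} {R D : ℝ}
    (hp : NearlyBetween D x p y) (hx : dist x (g • x) ≤ R) (hy : dist y (g • y) ≤ R)
    (hxp : 2 * R + 2 * D + 8 * δ < dist x p) (hyp : 2 * R + 2 * D + 8 * δ < dist y p) :
    dist p (g • p) ≤ stableTranslationLength g p + 4 * D + 16 * δ := by
  have : Nonempty X := ⟨x⟩
  have hδ : 0 ≤ δ := hX.nonneg
  have hD : 0 ≤ D := hp.nonneg
  have hR : 0 ≤ R := dist_nonneg.trans hx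
  have hp_le : dist p (g • p) ≤ |dist x p - dist x (g • p)| + 2 * (D + δ + δ) + 2 * δ :=
    (hp.mono (by linarith)).dist_le hX
      (hp.smul_of_far hX g hx hy (by linarith) (by linarith))
  have hshift : |dist x p - dist x (g • p)| ≤ R := by
    have h₁ := dist_triangle x (g • x) (g • p)
    have h₂ := dist_triangle_left (g • x) (g • p) x
    rw [dist_smul] at h₁ h₂
    exact abs_le.2 ⟨by linarith, by linarith⟩
  have hsq := abs_le.1 (abs_dist_sq_smul_sub_le hX g (x := x) (p := p) (by linarith)
    (by linarith [(abs_le.1 hshift).2]))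
  have htwice : 2 * |dist x p - dist x (g • p)| ≤ dist p (g ^ 2 • p) + 2 * δ := by
    have h₁ := dist_triangle x p (g ^ 2 • p)
    have h₂ := dist_triangle_right x p (g ^ 2 • p)
    rcases abs_cases (dist x p - dist x (g • p)) with ⟨h, _⟩ | ⟨h, _⟩ <;> rw [h] <;> linarith
  linarith [dist_sq_smul_le hX g p]

end TranslationLength

theorem isOfFinOrder_of_conj_pow_mem_finite {G : Type*} [Group G] {B : Set G} (hB : B.Finite)
    {g : G} (h : ∀ J : ℕ, ∃ k : G, ∀ j ≤ J, k⁻¹ * g ^ j * k ∈ B) : IsOfFinOrder g := by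
  by_contra hg
  obtain ⟨k, hk⟩ := h B.ncard
  have hinj : Function.Injective fun j : ℕ => k⁻¹ * g ^ j * k := fun a b hab =>
    injective_pow_iff_not_isOfFinOrder.2 hg (mul_left_cancel (mul_right_cancel hab))
  have hcard : ((fun j : ℕ => k⁻¹ * g ^ j * k) '' Set.Iic B.ncard).ncard ≤ B.ncard :=
    Set.ncard_le_ncard (Set.image_subset_iff.2 hk) hB
  rw [Set.ncard_image_of_injective _ hinj, Set.ncard_Iic_nat] at hcard
  omega

section ProperOrbit

variable {G X : Type*} [PseudoMetricSpace X] [Group G] [MulAction G X] {δ : ℝ}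

/-- Any two points of `A` have a midpoint in `A` up to an error `D`. -/
def IsCoarselyMidpointConvex (D : ℝ) (A : Set X) : Prop :=
  ∀ a ∈ A, ∀ b ∈ A, ∃ c ∈ A, dist a c ≤ dist a b / 2 + D ∧ dist b c ≤ dist a b / 2 + D

theorem exists_lt_dist_pow_smul {x : X} (hfin : ∀ r, {g : G | dist x (g • x) ≤ r}.Finite) {g : G}
    (hg : ¬IsOfFinOrder g) (r : ℝ) : ∃ n : ℕ, r < dist x (g ^ n • x) := by
  by_contra! hle
  exact Set.infinite_range_of_injective (injective_pow_iff_not_isOfFinOrder.2 hg)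
    ((hfin r).subset (Set.range_subset_iff.2 hle))

variable [IsIsometricSMul G X]

theorem exists_conj_pow_dist_le (hX : IsGromovHyperbolic X δ) {x : X} {D : ℝ}
    (hmid : IsCoarselyMidpointConvex D (MulAction.orbit G x)) {g : G}
    (hunb : ∀ r, ∃ n : ℕ, r < dist x (g ^ n • x)) (hg : stableTranslationLength g x = 0) (J : ℕ) :
    ∃ k : G, ∀ j ≤ J, dist x ((k⁻¹ * g ^ j * k) • x) ≤ 4 * D + 16 * δ := by
  obtain ⟨R, hR⟩ : ∃ R, ∀ j ≤ J, dist x (g ^ j • x) ≤ R := by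
    obtain ⟨R, hR⟩ := ((Set.finite_Iic J).image fun j => dist x (g ^ j • x)).bddAbove
    exact ⟨R, fun j hj => hR ⟨j, hj, rfl⟩⟩
  obtain ⟨n, hn⟩ := hunb (2 * (2 * R + 3 * D + 8 * δ))
  obtain ⟨_, ⟨k, rfl⟩, hx, hy⟩ := hmid x (MulAction.mem_orbit_self x) (g ^ n • x)
    (MulAction.mem_orbit x (g ^ n))
  dsimp only at hx hy
  have htri := dist_triangle_right x (g ^ n • x) (k • x)
  refine ⟨k, fun j hj => ?_⟩
  have hend : dist (g ^ n • x) (g ^ j • g ^ n • x) ≤ R := by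
    rw [← mul_smul, ← pow_add, add_comm, dist_pow_smul_pow_add_smul]
    exact hR j hj
  have hbetween : NearlyBetween D x (k • x) (g ^ n • x) := by
    unfold NearlyBetween
    linarith
  calc dist x ((k⁻¹ * g ^ j * k) • x) = dist (k • x) (g ^ j • k • x) := by
        rw [← dist_smul k, mul_assoc, mul_smul, smul_inv_smul, mul_smul]
    _ ≤ stableTranslationLength (g ^ j) (k • x) + 4 * D + 16 * δ :=
        dist_smul_le_of_nearlyBetween hX _ hbetween (hR j hj) hend (by linarith) (by linarith)
    _ = 4 * D + 16 * δ := by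
        rw [stableTranslationLength_pow, stableTranslationLength_eq g (k • x) x, hg, mul_zero,
          zero_add]

theorem stableTranslationLength_pos_of_finite_balls (hX : IsGromovHyperbolic X δ) {x : X}
    (hfin : ∀ r, {g : G | dist x (g • x) ≤ r}.Finite) {D : ℝ}
    (hmid : IsCoarselyMidpointConvex D (MulAction.orbit G x)) {g : G} (hg : ¬IsOfFinOrder g) :
    0 < stableTranslationLength g x := by
  refine (stableTranslationLength_nonneg g x).lt_of_ne' fun h₀ => hg ?_
  exact isOfFinOrder_of_conj_pow_mem_finite (hfin (4 * D + 16 * δ))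
    (exists_conj_pow_dist_le hX hmid (exists_lt_dist_pow_smul hfin hg) h₀)

end ProperOrbit

section WordLength

variable {G : Type*} [Group G] {S : Set G}

theorem wordLength_prod_le {w : List G} (hw : ∀ s ∈ w, s ∈ S) : wordLength S w.prod ≤ w.length :=
  Nat.sInf_le ⟨w, hw, rfl, rfl⟩

theorem exists_list_length_eq_wordLength {g : G} (hg : g ∈ Submonoid.closure S) :
    ∃ w : List G, (∀ s ∈ w, s ∈ S) ∧ w.length = wordLength S g ∧ w.prod = g := by
  obtain ⟨w, hw, hprod⟩ := Submonoid.exists_list_of_mem_closure hg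
  exact Nat.sInf_mem (s := {n | ∃ w : List G, (∀ s ∈ w, s ∈ S) ∧ w.length = n ∧ w.prod = g})
    ⟨w.length, w, hw, rfl, hprod⟩

theorem wordLength_mul_le {g h : G} (hg : g ∈ Submonoid.closure S) (hh : h ∈ Submonoid.closure S) :
    wordLength S (g * h) ≤ wordLength S g + wordLength S h := by
  obtain ⟨v, hv, hvlen, rfl⟩ := exists_list_length_eq_wordLength hg
  obtain ⟨w, hw, hwlen, rfl⟩ := exists_list_length_eq_wordLength hh
  rw [← hvlen, ← hwlen, ← List.prod_append, ← List.length_append]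
  exact wordLength_prod_le (List.forall_mem_append.2 ⟨hv, hw⟩)

theorem finite_setOf_wordLength_le (hfin : S.Finite) (hgen : Submonoid.closure S = ⊤) (N : ℕ) :
    {g : G | wordLength S g ≤ N}.Finite := by
  have := hfin.to_subtype
  refine ((List.finite_length_le S N).image fun w => (w.map Subtype.val).prod).subset fun g hg => ?_
  obtain ⟨w, hw, hlen, hprod⟩ := exists_list_length_eq_wordLength (hgen ▸ Submonoid.mem_top g)
  lift w to List S using hw
  exact ⟨w, by simpa using hlen.trans_le hg, hprod⟩

theorem exists_word_geodesic (hgen : Submonoid.closure S = ⊤) (a b : G) :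
    ∃ (m : ℕ) (p : ℕ → G), p 0 = a ∧ p m = b ∧
      ∀ i j, i ≤ j → j ≤ m → wordLength S ((p i)⁻¹ * p j) = j - i := by
  have mem : ∀ g : G, g ∈ Submonoid.closure S := fun g => hgen ▸ Submonoid.mem_top g
  obtain ⟨w, hw, hlen, hprod⟩ := exists_list_length_eq_wordLength (mem (a⁻¹ * b))
  let p : ℕ → G := fun i => a * (w.take i).prod
  have hp₀ : p 0 = a := by simp [p]
  have hpm : p w.length = b := by simp [p, hprod]
  have upper : ∀ i j, i ≤ j → j ≤ w.length → wordLength S ((p i)⁻¹ * p j) ≤ j - i := by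
    intro i j hij hj
    have hsegment : (p i)⁻¹ * p j = ((w.take j).drop i).prod := by
      have := List.prod_take_mul_prod_drop (w.take j) i
      rw [List.take_take, min_eq_left hij] at this
      simp only [p, ← this]
      group
    rw [hsegment]
    refine (wordLength_prod_le fun s hs =>
      hw s (List.mem_of_mem_take (List.mem_of_mem_drop hs))).trans_eq ?_
    rw [List.length_drop, List.length_take, min_eq_left hj]
  refine ⟨w.length, p, hp₀, hpm, fun i j hij hj => (upper i j hij hj).antisymm ?_⟩
  have htotal : w.length ≤ wordLength S ((p 0)⁻¹ * p i) +
      (wordLength S ((p i)⁻¹ * p j) + wordLength S ((p j)⁻¹ * p w.length)) :=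
    calc w.length = wordLength S ((p 0)⁻¹ * p i * ((p i)⁻¹ * p j * ((p j)⁻¹ * p w.length))) := by
          rw [hp₀, hpm, hlen]
          group
      _ ≤ _ := (wordLength_mul_le (mem _) (mem _)).trans
        (by gcongr; exact wordLength_mul_le (mem _) (mem _))
  have := upper 0 i (Nat.zero_le i) (hij.trans hj)
  have := upper j w.length hj le_rfl
  omega

variable {X : Type*} [PseudoMetricSpace X] [MulAction G X] {x : X} {K C : ℝ}

theorem finite_setOf_dist_smul_le (hfin : S.Finite) (hgen : Submonoid.closure S = ⊤) (hK : 0 < K)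
    (hlow : ∀ g : G, 1 / K * wordLength S g - C ≤ dist x (g • x)) (r : ℝ) :
    {g : G | dist x (g • x) ≤ r}.Finite := by
  refine (finite_setOf_wordLength_le hfin hgen ⌈K * (r + C)⌉₊).subset fun g hg => ?_
  have hg' : 1 / K * wordLength S g ≤ r + C := sub_le_iff_le_add.1 ((hlow g).trans hg)
  rw [one_div, inv_mul_le_iff₀ hK] at hg'
  exact_mod_cast hg'.trans (Nat.le_ceil _)

theorem exists_isCoarselyMidpointConvex_orbit {δ : ℝ} (hX : IsGromovHyperbolic X δ)
    (hgen : Submonoid.closure S = ⊤) (hK : 0 < K)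
    (hqi : ∀ a b : G,
      1 / K * (wordLength S (a⁻¹ * b) : ℝ) - C ≤ dist (a • x) (b • x) ∧
        dist (a • x) (b • x) ≤ K * (wordLength S (a⁻¹ * b) : ℝ) + C) :
    ∃ D, IsCoarselyMidpointConvex D (MulAction.orbit G x) := by
  obtain ⟨D, hD⟩ := IsQuasiGeodesic.exists_forall_near_midpoint hX hK C
  refine ⟨D, ?_⟩
  rintro _ ⟨a, rfl⟩ _ ⟨b, rfl⟩
  obtain ⟨m, p, rfl, rfl, hp⟩ := exists_word_geodesic hgen a b
  obtain ⟨i, -, hi⟩ := hD m (fun i => p i • x) fun i j hij hj => by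
    rw [← Nat.cast_sub hij, ← hp i j hij hj]
    exact hqi (p i) (p j)
  exact ⟨p i • x, MulAction.mem_orbit x (p i), hi⟩

theorem submonoid_closure_eq_top_of_inv_mem (hsymm : ∀ s ∈ S, s⁻¹ ∈ S)
    (hgen : Subgroup.closure S = ⊤) : Submonoid.closure S = ⊤ := by
  have hinv : S⁻¹ ⊆ S := fun s hs => inv_inv s ▸ hsymm _ hs
  rw [← Set.union_eq_self_of_subset_right hinv, ← Subgroup.closure_toSubmonoid, hgen,
    Subgroup.top_toSubmonoid]

end WordLength

theorem infinite_order_elements_loxodromic_general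
    {Γ : Type*} [Group Γ] {X : Type*} [PseudoMetricSpace X] {δ : ℝ} (hX : IsGromovHyperbolic X δ)
    [MulAction Γ X] [IsIsometricSMul Γ X] {S : Set Γ} (hSfin : S.Finite)
    (hSgen : Submonoid.closure S = ⊤) {x₀ : X} {K C : ℝ} (hK : 0 < K)
    (hqi : ∀ a b : Γ,
      1 / K * (wordLength S (a⁻¹ * b) : ℝ) - C ≤ dist (a • x₀) (b • x₀) ∧
        dist (a • x₀) (b • x₀) ≤ K * (wordLength S (a⁻¹ * b) : ℝ) + C)
    {γ : Γ} (hγ : ¬IsOfFinOrder γ) : 0 < stableTranslationLength γ x₀ := by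
  have hlow : ∀ g : Γ, 1 / K * wordLength S g - C ≤ dist x₀ (g • x₀) := fun g => by
    simpa using (hqi 1 g).1
  obtain ⟨D, hD⟩ := exists_isCoarselyMidpointConvex_orbit hX hSgen hK hqi
  exact stableTranslationLength_pos_of_finite_balls hX
    (finite_setOf_dist_smul_le hSfin hSgen hK hlow) hD hγ

theorem infinite_order_elements_loxodromic
    {Γ : Type*} [Group Γ] {X : Type*} [MetricSpace X] (δ : ℝ)
    (hδ : ∀ x y z w : X, gromovProd w x z ≥ min (gromovProd w x y) (gromovProd w y z) - δ)
    [MulAction Γ X] (hisom : ∀ γ : Γ, Isometry (fun x : X => γ • x))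
    (S : Set Γ) (hSfin : S.Finite) (hSsymm : ∀ s ∈ S, s⁻¹ ∈ S)
    (hSgen : Subgroup.closure S = ⊤)
    (x₀ : X) (K C : ℝ) (hK : 1 ≤ K) (hC : 0 ≤ C)
    (hqi : ∀ a b : Γ,
      (1 / K) * (wordLength S (a⁻¹ * b) : ℝ) - C ≤ dist (a • x₀) (b • x₀) ∧
        dist (a • x₀) (b • x₀) ≤ K * (wordLength S (a⁻¹ * b) : ℝ) + C) :
    ∀ γ : Γ, ¬ IsOfFinOrder γ →
      0 < Filter.liminf (fun n : ℕ => dist x₀ ((γ ^ n) • x₀) / n) Filter.atTop := by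
  have : IsIsometricSMul Γ X := ⟨hisom⟩
  have hX : IsGromovHyperbolic X δ := isGromovHyperbolic_of_gromovProd hδ
  exact fun γ => infinite_order_elements_loxodromic_general hX hSfin
    (submonoid_closure_eq_top_of_inv_mem hSsymm hSgen) (one_pos.trans_le hK) hqi
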